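/- arXiv:1811.08405 — 2 statements merged into one kernel-verified Lean document; each statement's English description precedes it below -/
import Mathlib

section
/- For every α, β, γ ∈ ℂ, the cyclic twist matrices K⁽²⁾ = αE₁₃ + βE₂₁ + γE₃₂ and K⁽³⁾ = βE₁₂ + γE₂₃ + αE₃₁ are symmetries of the principal gradation R-matrix: for all u ∈ ℂ with u ≠ 0, R_q(u)(K⁽²⁾ ⊗ K⁽²⁾) = (K⁽²⁾ ⊗ K⁽²⁾)R_q(u) and R_q(u)(K⁽³⁾ ⊗ K⁽³⁾) = (K⁽³⁾ ⊗ K⁽³⁾)R_q(u). Moreover every diagonal matrix K⁽¹⁾ = diag(α, β, γ) is also such a symmetry. -/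
open Matrix Kronecker BigOperators

/-- Elementary 3×3 matrices `E i j`. -/
noncomputable def Eb (i j : Fin 3) : Matrix (Fin 3) (Fin 3) ℂ :=
  Matrix.single i j 1

/-- Principal gradation trigonometric R-matrix of `U_q(gl₃^)`, with spectral
parameter `λ = u³` parametrized by the cube root `u`. -/
noncomputable def RpM (q u : ℂ) : Matrix (Fin 3 × Fin 3) (Fin 3 × Fin 3) ℂ :=
  (∑ k : Fin 3, ∑ p : Fin 3,
    if k = p then (u ^ 3 * q - (u ^ 3 * q)⁻¹) • (Eb k k ⊗ₖ Eb k k)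
    else (u ^ 3 - (u ^ 3)⁻¹) • (Eb k k ⊗ₖ Eb p p))
  + (q - q⁻¹) • ∑ k : Fin 3, ∑ p : Fin 3,
      (if k < p then
        u ^ ((3 : ℤ) - 2 * (((p : ℕ) : ℤ) - ((k : ℕ) : ℤ))) • (Eb k p ⊗ₖ Eb p k)
        + u ^ (2 * (((p : ℕ) : ℤ) - ((k : ℕ) : ℤ)) - (3 : ℤ)) • (Eb p k ⊗ₖ Eb k p)
      else 0)

/-- Diagonal twist matrix `K⁽¹⁾ = diag(α, β, γ)`. -/
noncomputable def Ktw1 (α β γ : ℂ) : Matrix (Fin 3) (Fin 3) ℂ :=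
  Matrix.diagonal ![α, β, γ]

/-- Cyclic twist matrix `K⁽²⁾ = αE₁₃ + βE₂₁ + γE₃₂`. -/
noncomputable def Ktw2 (α β γ : ℂ) : Matrix (Fin 3) (Fin 3) ℂ :=
  α • Eb 0 2 + β • Eb 1 0 + γ • Eb 2 1

/-- Cyclic twist matrix `K⁽³⁾ = βE₁₂ + γE₂₃ + αE₃₁`. -/
noncomputable def Ktw3 (α β γ : ℂ) : Matrix (Fin 3) (Fin 3) ℂ :=
  β • Eb 0 1 + γ • Eb 1 2 + α • Eb 2 0

/-- The generalized permutation matrix `∑ j, v j E_{j+s, j}` on an additive group. -/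
def shiftTwist {G : Type*} [AddGroup G] [DecidableEq G] (s : G) (v : G → ℂ) : Matrix G G ℂ :=
  Matrix.of fun i j => if i = j + s then v j else 0

/-- A matrix on `ℂ[G] ⊗ ℂ[G]` that is invariant under simultaneous translation of all indices and
only mixes `(a, b)` with `(b, a)` commutes with `K ⊗ K` for every shift twist `K`. -/
theorem mul_shiftTwist_kronecker {G : Type*} [AddGroup G] [Fintype G] [DecidableEq G]
    {R : Matrix (G × G) (G × G) ℂ}
    (shift : ∀ s a b c d, R (a + s, b + s) (c + s, d + s) = R (a, b) (c, d))
    (ice : ∀ a b c d, R (a, b) (c, d) ≠ 0 → (a = c ∧ b = d) ∨ (a = d ∧ b = c))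
    (s : G) (v : G → ℂ) :
    R * (shiftTwist s v ⊗ₖ shiftTwist s v) = (shiftTwist s v ⊗ₖ shiftTwist s v) * R := by
  ext ⟨a, b⟩ ⟨c, d⟩
  obtain ⟨a, rfl⟩ : ∃ a', a = a' + s := ⟨a - s, by simp⟩
  obtain ⟨b, rfl⟩ : ∃ b', b = b' + s := ⟨b - s, by simp⟩
  have left : (R * (shiftTwist s v ⊗ₖ shiftTwist s v)) (a + s, b + s) (c, d)
      = R (a, b) (c, d) * (v c * v d) := by
    rw [Matrix.mul_apply, Finset.sum_eq_single (c + s, d + s)]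
    · simp [shiftTwist, shift]
    · rintro ⟨x, y⟩ - h
      by_cases hx : x = c + s <;> by_cases hy : y = d + s <;> simp_all [shiftTwist]
    · simp
  have right : ((shiftTwist s v ⊗ₖ shiftTwist s v) * R) (a + s, b + s) (c, d)
      = v a * v b * R (a, b) (c, d) := by
    rw [Matrix.mul_apply, Finset.sum_eq_single (a, b)]
    · simp [shiftTwist]
    · rintro ⟨x, y⟩ - h
      by_cases hx : a = x <;> by_cases hy : b = y <;> simp_all [shiftTwist]
    · simp
  rw [left, right]
  by_cases h : R (a, b) (c, d) = 0
  · simp [h]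
  · obtain ⟨rfl, rfl⟩ | ⟨rfl, rfl⟩ := ice a b c d h <;> ring

set_option maxHeartbeats 1000000 in
/-- The entries of the R-matrix depend only on the cyclic difference of the two indices. -/
theorem RpM_apply (q u : ℂ) (a b c d : Fin 3) :
    RpM q u (a, b) (c, d) =
      if a = c ∧ b = d then
        if b - a = 0 then u ^ 3 * q - (u ^ 3 * q)⁻¹ else u ^ 3 - (u ^ 3)⁻¹
      else if a = d ∧ b = c then (q - q⁻¹) * (if b - a = 1 then u else u⁻¹)
      else 0 := by
  fin_cases a <;> fin_cases b <;> fin_cases c <;> fin_cases d <;>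
    simp [RpM, Eb, Fin.sum_univ_three, Matrix.add_apply]
  · exact fun h => absurd h (by decide)
  · exact fun h => absurd (by decide) h

theorem RpM_mul_shiftTwist_kronecker (q u : ℂ) (s : Fin 3) (v : Fin 3 → ℂ) :
    RpM q u * (shiftTwist s v ⊗ₖ shiftTwist s v)
      = (shiftTwist s v ⊗ₖ shiftTwist s v) * RpM q u := by
  refine mul_shiftTwist_kronecker (fun s a b c d => ?_) (fun a b c d h => ?_) s v
  · simp only [RpM_apply, add_left_inj, add_sub_add_right_eq_sub]
  · by_contra! hne
    rw [RpM_apply, if_neg (by tauto), if_neg (by tauto)] at h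
    exact h rfl

theorem Ktw1_eq_shiftTwist (α β γ : ℂ) : Ktw1 α β γ = shiftTwist 0 ![α, β, γ] := by
  ext i j
  fin_cases i <;> fin_cases j <;> simp [Ktw1, shiftTwist]

theorem Ktw2_eq_shiftTwist (α β γ : ℂ) : Ktw2 α β γ = shiftTwist 1 ![β, γ, α] := by
  ext i j
  fin_cases i <;> fin_cases j <;> simp [Ktw2, Eb, shiftTwist]

theorem Ktw3_eq_shiftTwist (α β γ : ℂ) : Ktw3 α β γ = shiftTwist 2 ![α, β, γ] := by
  ext i j
  fin_cases i <;> fin_cases j <;> simp [Ktw3, Eb, shiftTwist]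

/-- the cyclic twist matrices `K⁽²⁾`, `K⁽³⁾` and every diagonal
matrix `K⁽¹⁾` are symmetries of the principal gradation R-matrix. -/
theorem twist_symmetries_principal (q : ℂ) (hq : q ≠ 0) (α β γ : ℂ) :
    (∀ u : ℂ, u ≠ 0 →
        RpM q u * (Ktw2 α β γ ⊗ₖ Ktw2 α β γ) = (Ktw2 α β γ ⊗ₖ Ktw2 α β γ) * RpM q u)
    ∧ (∀ u : ℂ, u ≠ 0 →
        RpM q u * (Ktw3 α β γ ⊗ₖ Ktw3 α β γ) = (Ktw3 α β γ ⊗ₖ Ktw3 α β γ) * RpM q u)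
    ∧ (∀ u : ℂ, u ≠ 0 →
        RpM q u * (Ktw1 α β γ ⊗ₖ Ktw1 α β γ) = (Ktw1 α β γ ⊗ₖ Ktw1 α β γ) * RpM q u) := by
  rw [Ktw1_eq_shiftTwist, Ktw2_eq_shiftTwist, Ktw3_eq_shiftTwist]
  exact ⟨fun u _ => RpM_mul_shiftTwist_kronecker q u _ _,
    fun u _ => RpM_mul_shiftTwist_kronecker q u _ _,
    fun u _ => RpM_mul_shiftTwist_kronecker q u _ _⟩
end

section
/- The fusion identity holds at the inhomogeneity points: for every b ∈ {1, …, N}, T₁(ζ_b) T₁(ζ_b/p) = T₂(ζ_b) in End(H). -/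
open Matrix Kronecker BigOperators

/-- Index type of the quantum space `H = (ℂ³)^{⊗N}`. -/
abbrev HIdx (N : ℕ) := Fin N → Fin 3

/-- `R_{a,b}(u)`: the R-matrix acting on the auxiliary space and the `b`-th
factor of the quantum space, identity elsewhere. -/
noncomputable def Raux (N : ℕ) (q u : ℂ) (b : Fin N) :
    Matrix (Fin 3 × HIdx N) (Fin 3 × HIdx N) ℂ :=
  Matrix.of fun x y =>
    RpM q u (x.1, x.2 b) (y.1, y.2 b) * (if ∀ c, c ≠ b → x.2 c = y.2 c then 1 else 0)

/-- The twist matrix acting on the auxiliary space, identity on `H`. -/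
noncomputable def Kaux (N : ℕ) (K : Matrix (Fin 3) (Fin 3) ℂ) :
    Matrix (Fin 3 × HIdx N) (Fin 3 × HIdx N) ℂ :=
  Matrix.of fun x y => K x.1 y.1 * (if x.2 = y.2 then 1 else 0)

/-- Monodromy matrix `M(u) = K_a R_{a,N}(u/ζ_N) ⋯ R_{a,1}(u/ζ_1)`. -/
noncomputable def Mon (N : ℕ) (q : ℂ) (ζ : Fin N → ℂ) (K : Matrix (Fin 3) (Fin 3) ℂ)
    (u : ℂ) : Matrix (Fin 3 × HIdx N) (Fin 3 × HIdx N) ℂ :=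
  Kaux N K * (((List.finRange N).reverse.map fun b => Raux N q (u / ζ b) b).prod)

/-- Transfer matrix `T₁(u) = tr_a M(u)`. -/
noncomputable def T1 (N : ℕ) (q : ℂ) (ζ : Fin N → ℂ) (K : Matrix (Fin 3) (Fin 3) ℂ)
    (u : ℂ) : Matrix (HIdx N) (HIdx N) ℂ :=
  Matrix.of fun f g => ∑ i : Fin 3, Mon N q ζ K u (i, f) (i, g)

/-- The q-antisymmetric projector `P⁻ = R_q(p⁻¹)/(2(q⁻¹ − q))`. -/
noncomputable def Pm (q p : ℂ) : Matrix (Fin 3 × Fin 3) (Fin 3 × Fin 3) ℂ :=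
  (2 * (q⁻¹ - q))⁻¹ • RpM q p⁻¹

/-- Embedding of an operator on (auxiliary space a) ⊗ H into
(aux a) ⊗ (aux b) ⊗ H, identity on aux b. -/
noncomputable def embA (N : ℕ) (M : Matrix (Fin 3 × HIdx N) (Fin 3 × HIdx N) ℂ) :
    Matrix (Fin 3 × Fin 3 × HIdx N) (Fin 3 × Fin 3 × HIdx N) ℂ :=
  Matrix.of fun x y => M (x.1, x.2.2) (y.1, y.2.2) * (if x.2.1 = y.2.1 then 1 else 0)

/-- Embedding of an operator on (auxiliary space b) ⊗ H into
(aux a) ⊗ (aux b) ⊗ H, identity on aux a. -/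
noncomputable def embB (N : ℕ) (M : Matrix (Fin 3 × HIdx N) (Fin 3 × HIdx N) ℂ) :
    Matrix (Fin 3 × Fin 3 × HIdx N) (Fin 3 × Fin 3 × HIdx N) ℂ :=
  Matrix.of fun x y => M (x.2.1, x.2.2) (y.2.1, y.2.2) * (if x.1 = y.1 then 1 else 0)

/-- Embedding of an operator on (aux a) ⊗ (aux b) into (aux a) ⊗ (aux b) ⊗ H. -/
noncomputable def embP (N : ℕ) (P : Matrix (Fin 3 × Fin 3) (Fin 3 × Fin 3) ℂ) :
    Matrix (Fin 3 × Fin 3 × HIdx N) (Fin 3 × Fin 3 × HIdx N) ℂ :=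
  Matrix.of fun x y => P (x.1, x.2.1) (y.1, y.2.1) * (if x.2.2 = y.2.2 then 1 else 0)

/-- Fused transfer matrix `T₂(u) = tr_{ab}(P⁻_{ab} M_b(u) M_a(u/p))`. -/
noncomputable def T2 (N : ℕ) (q p : ℂ) (ζ : Fin N → ℂ) (K : Matrix (Fin 3) (Fin 3) ℂ)
    (u : ℂ) : Matrix (HIdx N) (HIdx N) ℂ :=
  Matrix.of fun f g => ∑ ia : Fin 3, ∑ ib : Fin 3,
    (embP N (Pm q p) * embB N (Mon N q ζ K u) * embA N (Mon N q ζ K (u / p)))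
      (ia, ib, f) (ia, ib, g)

/-- Diagonal coefficient of the R-matrix on the basis vector `(i, j)`. -/
noncomputable def diagCoeff (q u : ℂ) (i j : Fin 3) : ℂ :=
  if i = j then u ^ 3 * q - (u ^ 3 * q)⁻¹ else u ^ 3 - (u ^ 3)⁻¹

/-- Exchange coefficient of the R-matrix on the basis vector `(i, j)`. -/
noncomputable def swapCoeff (q u : ℂ) (i j : Fin 3) : ℂ :=
  if i < j then (q - q⁻¹) * u ^ ((3 : ℤ) - 2 * (((j : ℕ) : ℤ) - ((i : ℕ) : ℤ)))
  else if j < i then (q - q⁻¹) * u ^ (2 * (((i : ℕ) : ℤ) - ((j : ℕ) : ℤ)) - (3 : ℤ))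
  else 0

theorem RpM_apply_s9 (q u : ℂ) (i j k l : Fin 3) :
    RpM q u (i, j) (k, l) = (if i = k ∧ j = l then diagCoeff q u i j else 0)
      + (if i = l ∧ j = k then swapCoeff q u i j else 0) := by
  unfold RpM diagCoeff swapCoeff Eb
  simp only [Fin.sum_univ_three]
  fin_cases i <;> fin_cases j <;> fin_cases k <;> fin_cases l <;>
    simp

theorem sum_RpM_mul (q u : ℂ) (i j : Fin 3) (f : Fin 3 → Fin 3 → ℂ) :
    ∑ k, ∑ l, RpM q u (i, j) (k, l) * f k l
      = diagCoeff q u i j * f i j + swapCoeff q u i j * f j i := by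
  simp only [RpM_apply_s9, add_mul, Finset.sum_add_distrib, ite_mul, zero_mul, ite_and]
  congr 1
  · simp
  · rw [Finset.sum_comm]
    simp

/-- The Yang–Baxter equation, written pointwise for functions on `(Fin 3)³`. -/
theorem yangBaxter_pointwise (q u v : ℂ) (hq : q ≠ 0) (hu : u ≠ 0) (hv : v ≠ 0)
    (f : Fin 3 → Fin 3 → Fin 3 → ℂ) (a b c : Fin 3) :
    let D := diagCoeff q
    let C := swapCoeff q
    let Rab : (Fin 3 → Fin 3 → Fin 3 → ℂ) → Fin 3 → Fin 3 → Fin 3 → ℂ :=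
      fun g a b c => D u a b * g a b c + C u a b * g b a c
    let Rac : (Fin 3 → Fin 3 → Fin 3 → ℂ) → Fin 3 → Fin 3 → Fin 3 → ℂ :=
      fun g a b c => D (u * v) a c * g a b c + C (u * v) a c * g c b a
    let Rbc : (Fin 3 → Fin 3 → Fin 3 → ℂ) → Fin 3 → Fin 3 → Fin 3 → ℂ :=
      fun g a b c => D v b c * g a b c + C v b c * g a c b
    Rab (Rac (Rbc f)) a b c = Rbc (Rac (Rab f)) a b c := by
  have exp_pos : ((3 : ℤ) - 2) = 1 := by norm_num
  have exp_neg : ((2 : ℤ) - 3) = -1 := by norm_num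
  fin_cases a <;> fin_cases b <;> fin_cases c <;>
    simp [diagCoeff, swapCoeff, exp_pos, exp_neg] <;> field_simp <;> ring

theorem RpM_inv_mul_self (q p : ℂ) (hq : q ≠ 0) (hp : p ^ 3 = q) :
    RpM q p⁻¹ * RpM q p⁻¹ = (2 * (q⁻¹ - q)) • RpM q p⁻¹ := by
  have hp0 : p ≠ 0 := by rintro rfl; exact hq (by simpa using hp.symm)
  subst hp
  have exp_pos : ((3 : ℤ) - 2) = 1 := by norm_num
  have exp_neg : ((2 : ℤ) - 3) = -1 := by norm_num
  ext ⟨i, j⟩ ⟨k, l⟩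
  rw [Matrix.mul_apply, Fintype.sum_prod_type,
    sum_RpM_mul _ _ i j fun r s => RpM (p ^ 3) p⁻¹ (r, s) (k, l)]
  simp only [Matrix.smul_apply, smul_eq_mul, RpM_apply_s9]
  by_cases hij : i = j
  · subst hij
    simp [diagCoeff, swapCoeff, hp0]
  · have hD : diagCoeff (p ^ 3) p⁻¹ i j = (p ^ 3)⁻¹ - p ^ 3 := by simp [diagCoeff, hij]
    have hD' : diagCoeff (p ^ 3) p⁻¹ j i = (p ^ 3)⁻¹ - p ^ 3 := by
      simp [diagCoeff, Ne.symm hij]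
    have hC : swapCoeff (p ^ 3) p⁻¹ i j * swapCoeff (p ^ 3) p⁻¹ j i
        = ((p ^ 3)⁻¹ - p ^ 3) ^ 2 := by
      clear hD hD'
      fin_cases i <;> fin_cases j <;>
        simp [swapCoeff, exp_pos, exp_neg] at hij ⊢ <;> field_simp <;> ring
    rw [hD, hD']
    have h₁ : (j = k ∧ i = l) ↔ (i = l ∧ j = k) := and_comm
    have h₂ : (j = l ∧ i = k) ↔ (i = k ∧ j = l) := and_comm
    simp only [h₁, h₂]
    split_ifs <;> first | ring1 | linear_combination hC

theorem sum_eq_sum_update {N : ℕ} (s : Fin N) (x : HIdx N) (F : HIdx N → ℂ) :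
    ∑ y : HIdx N, (if ∀ c, c ≠ s → x c = y c then F y else 0)
      = ∑ k, F (Function.update x s k) := by
  rw [← Finset.sum_filter]
  refine Finset.sum_nbij' (fun y => y s) (fun k => Function.update x s k) ?_ ?_ ?_ ?_ ?_
  · simp
  · intro k _
    simp only [Finset.mem_filter, Finset.mem_univ, true_and]
    intro c hc
    simp [hc]
  · intro y hy
    simp only [Finset.mem_filter, Finset.mem_univ, true_and] at hy
    ext1 c
    by_cases hc : c = s
    · subst hc; simp
    · simp [hc, hy c hc]
  · simp
  · intro y hy
    simp only [Finset.mem_filter, Finset.mem_univ, true_and] at hy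
    congr 1
    ext1 c
    by_cases hc : c = s
    · subst hc; simp
    · simp [hc, hy c hc]

theorem Raux_mulVec (N : ℕ) (q u : ℂ) (s : Fin N) (f : Fin 3 × HIdx N → ℂ)
    (i : Fin 3) (x : HIdx N) :
    (Raux N q u s *ᵥ f) (i, x) = diagCoeff q u i (x s) * f (i, x)
      + swapCoeff q u i (x s) * f (x s, Function.update x s i) := by
  have h : (Raux N q u s *ᵥ f) (i, x)
      = ∑ j, ∑ y : HIdx N, (if ∀ c, c ≠ s → x c = y c then
          RpM q u (i, x s) (j, y s) * f (j, y) else 0) := by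
    simp [Matrix.mulVec, dotProduct, Fintype.sum_prod_type, Raux]
  rw [h]
  simp only [sum_eq_sum_update s x fun y => RpM q u (i, x s) (_, y s) * f (_, y)]
  simpa using sum_RpM_mul q u i (x s) fun j k => f (j, Function.update x s k)

theorem embA_mulVec (N : ℕ) (M : Matrix (Fin 3 × HIdx N) (Fin 3 × HIdx N) ℂ)
    (f : Fin 3 × Fin 3 × HIdx N → ℂ) (a b : Fin 3) (x : HIdx N) :
    (embA N M *ᵥ f) (a, b, x) = (M *ᵥ fun z => f (z.1, b, z.2)) (a, x) := by
  simp only [Matrix.mulVec, dotProduct, Fintype.sum_prod_type, embA, Matrix.of_apply]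
  refine Finset.sum_congr rfl fun i _ => ?_
  rw [Finset.sum_comm]
  simp

theorem embB_mulVec (N : ℕ) (M : Matrix (Fin 3 × HIdx N) (Fin 3 × HIdx N) ℂ)
    (f : Fin 3 × Fin 3 × HIdx N → ℂ) (a b : Fin 3) (x : HIdx N) :
    (embB N M *ᵥ f) (a, b, x) = (M *ᵥ fun z => f (a, z.1, z.2)) (b, x) := by
  simp only [Matrix.mulVec, dotProduct, Fintype.sum_prod_type, embB, Matrix.of_apply]
  rw [Finset.sum_comm]
  refine Finset.sum_congr rfl fun i _ => ?_
  rw [Finset.sum_comm]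
  simp

theorem embP_mulVec (N : ℕ) (P : Matrix (Fin 3 × Fin 3) (Fin 3 × Fin 3) ℂ)
    (f : Fin 3 × Fin 3 × HIdx N → ℂ) (a b : Fin 3) (x : HIdx N) :
    (embP N P *ᵥ f) (a, b, x) = (P *ᵥ fun z => f (z.1, z.2, x)) (a, b) := by
  simp [Matrix.mulVec, dotProduct, Fintype.sum_prod_type, embP]

theorem embP_RpM_mulVec (N : ℕ) (q u : ℂ) (f : Fin 3 × Fin 3 × HIdx N → ℂ)
    (a b : Fin 3) (x : HIdx N) :
    (embP N (RpM q u) *ᵥ f) (a, b, x)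
      = diagCoeff q u a b * f (a, b, x) + swapCoeff q u a b * f (b, a, x) := by
  rw [embP_mulVec]
  simpa [Matrix.mulVec, dotProduct, Fintype.sum_prod_type] using
    sum_RpM_mul q u a b fun k l => f (k, l, x)

theorem Kaux_mulVec (N : ℕ) (K : Matrix (Fin 3) (Fin 3) ℂ) (f : Fin 3 × HIdx N → ℂ)
    (i : Fin 3) (x : HIdx N) :
    (Kaux N K *ᵥ f) (i, x) = ∑ j, K i j * f (j, x) := by
  simp [Matrix.mulVec, dotProduct, Fintype.sum_prod_type, Kaux]

theorem matrix_eq_of_mulVec {n : Type*} [Fintype n] {A B : Matrix n n ℂ}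
    (h : ∀ f i, (A *ᵥ f) i = (B *ᵥ f) i) : A = B :=
  Matrix.mulVec_injective (funext fun f => funext (h f))

theorem embA_mul (N : ℕ) (M M' : Matrix (Fin 3 × HIdx N) (Fin 3 × HIdx N) ℂ) :
    embA N (M * M') = embA N M * embA N M' := by
  refine matrix_eq_of_mulVec ?_
  rintro f ⟨a, b, x⟩
  simp only [← Matrix.mulVec_mulVec, embA_mulVec]

theorem embB_mul (N : ℕ) (M M' : Matrix (Fin 3 × HIdx N) (Fin 3 × HIdx N) ℂ) :
    embB N (M * M') = embB N M * embB N M' := by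
  refine matrix_eq_of_mulVec ?_
  rintro f ⟨a, b, x⟩
  simp only [← Matrix.mulVec_mulVec, embB_mulVec]

theorem embP_mul (N : ℕ) (P P' : Matrix (Fin 3 × Fin 3) (Fin 3 × Fin 3) ℂ) :
    embP N (P * P') = embP N P * embP N P' := by
  refine matrix_eq_of_mulVec ?_
  rintro f ⟨a, b, x⟩
  simp only [← Matrix.mulVec_mulVec, embP_mulVec]

theorem embP_smul (N : ℕ) (c : ℂ) (P : Matrix (Fin 3 × Fin 3) (Fin 3 × Fin 3) ℂ) :
    embP N (c • P) = c • embP N P := by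
  ext
  simp [embP]

theorem embA_one (N : ℕ) : embA N 1 = 1 := by
  refine matrix_eq_of_mulVec ?_
  rintro f ⟨a, b, x⟩
  simp [embA_mulVec]

theorem embB_one (N : ℕ) : embB N 1 = 1 := by
  refine matrix_eq_of_mulVec ?_
  rintro f ⟨a, b, x⟩
  simp [embB_mulVec]

theorem embA_list_prod (N : ℕ) (l : List (Matrix (Fin 3 × HIdx N) (Fin 3 × HIdx N) ℂ)) :
    embA N l.prod = (l.map (embA N)).prod := by
  induction l with
  | nil => simp [embA_one]
  | cons M l ih => simp [embA_mul, ih]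

theorem embB_list_prod (N : ℕ) (l : List (Matrix (Fin 3 × HIdx N) (Fin 3 × HIdx N) ℂ)) :
    embB N l.prod = (l.map (embB N)).prod := by
  induction l with
  | nil => simp [embB_one]
  | cons M l ih => simp [embB_mul, ih]

theorem commute_embB_embA_Raux (N : ℕ) (q u v : ℂ) {s t : Fin N} (h : s ≠ t) :
    Commute (embB N (Raux N q u s)) (embA N (Raux N q v t)) := by
  refine matrix_eq_of_mulVec ?_
  rintro f ⟨a, b, x⟩
  simp only [← Matrix.mulVec_mulVec, embA_mulVec, embB_mulVec, Raux_mulVec,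
    Function.update_of_ne h, Function.update_of_ne h.symm, Function.update_comm h]
  ring

theorem commute_embB_Raux_embA_Kaux (N : ℕ) (q u : ℂ) (s : Fin N)
    (K : Matrix (Fin 3) (Fin 3) ℂ) :
    Commute (embB N (Raux N q u s)) (embA N (Kaux N K)) := by
  refine matrix_eq_of_mulVec ?_
  rintro f ⟨a, b, x⟩
  simp only [← Matrix.mulVec_mulVec, embA_mulVec, embB_mulVec, Raux_mulVec, Kaux_mulVec,
    Fin.sum_univ_three]
  ring

theorem embB_Kaux_mul_embA_Kaux (N : ℕ) (K : Matrix (Fin 3) (Fin 3) ℂ) :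
    embB N (Kaux N K) * embA N (Kaux N K) = embP N (K ⊗ₖ K) := by
  refine matrix_eq_of_mulVec ?_
  rintro f ⟨a, b, x⟩
  simp only [← Matrix.mulVec_mulVec, embA_mulVec, embB_mulVec, embP_mulVec, Kaux_mulVec]
  simp only [Matrix.mulVec, dotProduct, Fintype.sum_prod_type, Matrix.kroneckerMap_apply,
    Fin.sum_univ_three]
  ring

theorem embP_embA_embB_yangBaxter (N : ℕ) (q u v : ℂ) (hq : q ≠ 0) (hu : u ≠ 0)
    (hv : v ≠ 0) (s : Fin N) :
    embP N (RpM q u) * embA N (Raux N q (u * v) s) * embB N (Raux N q v s)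
      = embB N (Raux N q v s) * embA N (Raux N q (u * v) s) * embP N (RpM q u) := by
  refine matrix_eq_of_mulVec ?_
  rintro f ⟨a, b, x⟩
  have h := yangBaxter_pointwise q u v hq hu hv
    (fun i j k => f (i, j, Function.update x s k)) a b (x s)
  simp only [← Matrix.mulVec_mulVec, embA_mulVec, embB_mulVec, embP_RpM_mulVec, Raux_mulVec,
    Function.update_self, Function.update_idem]
  simpa only [Function.update_eq_self] using h

theorem diagCoeff_one_of_ne (q : ℂ) {i j : Fin 3} (h : i ≠ j) : diagCoeff q 1 i j = 0 := by
  simp [diagCoeff, h]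

theorem swapCoeff_one_of_ne (q : ℂ) {i j : Fin 3} (h : i ≠ j) :
    swapCoeff q 1 i j = q - q⁻¹ := by
  rcases lt_or_gt_of_ne h with h' | h' <;> simp [swapCoeff, h', h'.not_gt]

theorem embB_Raux_one_mulVec (N : ℕ) (q : ℂ) (s : Fin N)
    (f : Fin 3 × Fin 3 × HIdx N → ℂ) (a b : Fin 3) (x : HIdx N) :
    (embB N (Raux N q 1 s) *ᵥ f) (a, b, x)
      = (q - q⁻¹) * f (a, x s, Function.update x s b) := by
  rw [embB_mulVec, Raux_mulVec]
  by_cases h : b = x s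
  · subst h
    simp [diagCoeff, swapCoeff]
  · simp [diagCoeff_one_of_ne q h, swapCoeff_one_of_ne q h]

theorem embB_Raux_one_mul_embA_Raux (N : ℕ) (q u : ℂ) (s : Fin N) :
    embB N (Raux N q 1 s) * embA N (Raux N q u s)
      = embP N (RpM q u) * embB N (Raux N q 1 s) := by
  refine matrix_eq_of_mulVec ?_
  rintro f ⟨a, b, x⟩
  simp only [← Matrix.mulVec_mulVec, embP_RpM_mulVec, embB_Raux_one_mulVec]
  simp only [embA_mulVec, Raux_mulVec, Function.update_self, Function.update_idem]
  ring

section Monoid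

variable {ι M : Type*} [Monoid M] {A B : ι → M} {R : M}

theorem list_prod_mul_list_prod_mul_of_intertwine {l : List ι} (hl : l.Nodup)
    (hAB : ∀ s t, s ≠ t → Commute (B s) (A t))
    (hR : ∀ s ∈ l, R * A s * B s = B s * A s * R) :
    (l.map B).prod * (l.map A).prod * R = R * (l.map A).prod * (l.map B).prod := by
  induction l with
  | nil => simp
  | cons s l ih =>
    obtain ⟨hs, hl⟩ := List.nodup_cons.1 hl
    have ih := ih hl fun t ht => hR t (List.mem_cons_of_mem _ ht)
    have hBA : Commute (l.map B).prod (A s) := by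
      refine Commute.list_prod_left _ _ fun x hx => ?_
      obtain ⟨t, ht, rfl⟩ := List.mem_map.1 hx
      exact hAB t s fun h => hs (h ▸ ht)
    have hAB' : Commute (B s) (l.map A).prod := by
      refine Commute.list_prod_right _ _ fun x hx => ?_
      obtain ⟨t, ht, rfl⟩ := List.mem_map.1 hx
      exact hAB s t fun h => hs (h ▸ ht)
    simp only [List.map_cons, List.prod_cons]
    calc B s * (l.map B).prod * (A s * (l.map A).prod) * R
        = B s * ((l.map B).prod * A s) * (l.map A).prod * R := by simp only [mul_assoc]
      _ = B s * A s * ((l.map B).prod * (l.map A).prod * R) := by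
          rw [hBA.eq]; simp only [mul_assoc]
      _ = (B s * A s * R) * (l.map A).prod * (l.map B).prod := by
          rw [ih]; simp only [mul_assoc]
      _ = R * A s * (B s * (l.map A).prod) * (l.map B).prod := by
          rw [← hR s List.mem_cons_self]; simp only [mul_assoc]
      _ = R * (A s * (l.map A).prod) * (B s * (l.map B).prod) := by
          rw [hAB'.eq]; simp only [mul_assoc]

theorem exists_list_prod_mul_list_prod_eq {l : List ι} (hl : l.Nodup) {k k' : M}
    (hAB : ∀ s t, s ≠ t → Commute (B s) (A t)) (hBk : ∀ s, Commute (B s) k)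
    (hR : ∀ s ∈ l, R * A s * B s = B s * A s * R)
    (hk : R * (k' * k) = k' * k * R) {s : ι} (hs : s ∈ l) (hRs : B s * A s = R * B s) :
    ∃ X, k' * (l.map B).prod * (k * (l.map A).prod) = R * X := by
  obtain ⟨l₁, l₂, rfl⟩ := List.append_of_mem hs
  obtain ⟨hl₁, hl₂, hdisj⟩ := List.nodup_append.1 hl
  obtain ⟨hs₂, -⟩ := List.nodup_cons.1 hl₂
  have hcomm : ∀ l l' : List ι, (∀ i ∈ l, ∀ j ∈ l', i ≠ j) →
      Commute (l.map B).prod (l'.map A).prod := by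
    intro l l' h
    refine Commute.list_prod_left _ _ fun x hx => Commute.list_prod_right _ _ fun y hy => ?_
    obtain ⟨i, hi, rfl⟩ := List.mem_map.1 hx
    obtain ⟨j, hj, rfl⟩ := List.mem_map.1 hy
    exact hAB i j (h i hi j hj)
  have hBk' : Commute ((l₁ ++ s :: l₂).map B).prod k := by
    refine Commute.list_prod_left _ _ fun x hx => ?_
    obtain ⟨t, -, rfl⟩ := List.mem_map.1 hx
    exact hBk t
  have h₁ : Commute (B s * (l₂.map B).prod) (l₁.map A).prod := by
    simpa using hcomm (s :: l₂) l₁ fun i hi j hj => (hdisj j hj i hi).symm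
  have h₂ : Commute (l₂.map B).prod (A s) := by
    simpa using hcomm l₂ [s] fun i hi j hj => by
      rintro rfl; exact hs₂ (List.mem_singleton.1 hj ▸ hi)
  have h₃ := list_prod_mul_list_prod_mul_of_intertwine hl₁ hAB
    fun t ht => hR t (List.mem_append_left _ ht)
  refine ⟨k' * k * (l₁.map A).prod * (l₁.map B).prod * B s * (l₂.map B).prod
    * (l₂.map A).prod, ?_⟩
  calc _ = k' * (((l₁ ++ s :: l₂).map B).prod * k) * ((l₁ ++ s :: l₂).map A).prod := by
          simp only [mul_assoc]
    _ = k' * k * (l₁.map B).prod * ((B s * (l₂.map B).prod) * (l₁.map A).prod)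
          * A s * (l₂.map A).prod := by
        rw [hBk'.eq]
        simp only [List.map_append, List.map_cons, List.prod_append, List.prod_cons, mul_assoc]
    _ = k' * k * (l₁.map B).prod * (l₁.map A).prod * B s * ((l₂.map B).prod * A s)
          * (l₂.map A).prod := by
        rw [h₁.eq]; simp only [mul_assoc]
    _ = k' * k * (l₁.map B).prod * (l₁.map A).prod * (B s * A s) * (l₂.map B).prod
          * (l₂.map A).prod := by
        rw [h₂.eq]; simp only [mul_assoc]
    _ = k' * k * ((l₁.map B).prod * (l₁.map A).prod * R) * B s * (l₂.map B).prod
          * (l₂.map A).prod := by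
        rw [hRs]; simp only [mul_assoc]
    _ = (k' * k * R) * (l₁.map A).prod * (l₁.map B).prod * B s * (l₂.map B).prod
          * (l₂.map A).prod := by
        rw [h₃]; simp only [mul_assoc]
    _ = _ := by
        rw [← hk]; simp only [mul_assoc]

end Monoid

theorem T1_mul_T1_apply (N : ℕ) (q : ℂ) (ζ : Fin N → ℂ) (K : Matrix (Fin 3) (Fin 3) ℂ)
    (u v : ℂ) (f g : HIdx N) :
    (T1 N q ζ K u * T1 N q ζ K v) f g = ∑ a : Fin 3, ∑ b : Fin 3,
      (embB N (Mon N q ζ K u) * embA N (Mon N q ζ K v)) (a, b, f) (a, b, g) := by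
  have h : ∀ a b, (embB N (Mon N q ζ K u) * embA N (Mon N q ζ K v)) (a, b, f) (a, b, g)
      = ∑ x, Mon N q ζ K u (b, f) (b, x) * Mon N q ζ K v (a, x) (a, g) := by
    intro a b
    simp only [Matrix.mul_apply, Fintype.sum_prod_type, embA, embB, Matrix.of_apply]
    rw [Finset.sum_eq_single a, Finset.sum_eq_single b]
    · simp
    · intro j _ hj; simp [hj]
    · simp
    · intro i _ hi; simp [hi.symm]
    · simp
  simp only [h, Matrix.mul_apply, T1, Matrix.of_apply, Finset.sum_mul_sum]
  rw [Finset.sum_comm]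
  simp only [Finset.sum_comm (s := (Finset.univ : Finset (HIdx N)))]
  rw [Finset.sum_comm]

/-- fusion identity at the inhomogeneity points:
`T₁(ζ_b) T₁(ζ_b/p) = T₂(ζ_b)`. -/
theorem fusion_identity_at_inhomogeneities (N : ℕ) (hN : 1 ≤ N) (q p : ℂ)
    (hq : q ≠ 0) (hq2 : q ^ 2 ≠ 1) (hp : p ^ 3 = q)
    (ζ : Fin N → ℂ) (hζ : ∀ b, ζ b ≠ 0) (K : Matrix (Fin 3) (Fin 3) ℂ)
    (hK : ∀ w : ℂ, w ≠ 0 → RpM q w * (K ⊗ₖ K) = (K ⊗ₖ K) * RpM q w)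
    (b : Fin N) :
    T1 N q ζ K (ζ b) * T1 N q ζ K (ζ b / p) = T2 N q p ζ K (ζ b) := by
  have hp0 : p ≠ 0 := by rintro rfl; exact hq (by simpa using hp.symm)
  have hc : 2 * (q⁻¹ - q) ≠ 0 := by
    refine mul_ne_zero two_ne_zero fun h => hq2 ?_
    field_simp at h
    linear_combination -h
  have hdiv : ∀ s, ζ b / p / ζ s = p⁻¹ * (ζ b / ζ s) := fun s => by field_simp
  obtain ⟨X, hX⟩ : ∃ X, embB N (Mon N q ζ K (ζ b)) * embA N (Mon N q ζ K (ζ b / p))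
      = embP N (RpM q p⁻¹) * X := by
    simp only [Mon, embA_mul, embB_mul, embA_list_prod, embB_list_prod, List.map_map, hdiv]
    refine exists_list_prod_mul_list_prod_eq (s := b)
      (List.nodup_reverse.2 (List.nodup_finRange N)) ?_ ?_ ?_ ?_ (by simp) ?_
    · intro s t hst
      exact commute_embB_embA_Raux N q _ _ hst
    · intro s
      exact commute_embB_Raux_embA_Kaux N q _ s K
    · intro s _
      exact embP_embA_embB_yangBaxter N q _ _ hq (inv_ne_zero hp0)
        (div_ne_zero (hζ b) (hζ s)) s
    · rw [embB_Kaux_mul_embA_Kaux, ← embP_mul, ← embP_mul, hK _ (inv_ne_zero hp0)]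
    · simpa [div_self (hζ b)] using embB_Raux_one_mul_embA_Raux N q p⁻¹ b
  have hP : embP N (Pm q p) * embP N (RpM q p⁻¹) = embP N (RpM q p⁻¹) := by
    rw [← embP_mul, Pm, Matrix.smul_mul, RpM_inv_mul_self q p hq hp, smul_smul,
      inv_mul_cancel₀ hc, one_smul]
  ext f g
  rw [T1_mul_T1_apply]
  simp only [T2, Matrix.of_apply, Matrix.mul_assoc, hX]
  simp only [← Matrix.mul_assoc, hP]
end
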